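/- Every closed subgroup H₀ of a countable product ∏ₙ ℝ^{kₙ} of finite-dimensional Euclidean groups which is not locally compact is topologically isomorphic to ℤ^k ⊕ ℝ^l, where k, l ∈ ℕ ∪ {ℕ} and at least one of k, l equals ℕ. -/

import Mathlib

/-!
The proof is a concrete form of Pontryagin duality. A closed subgroup `H` of `ℝ^σ` is its own
bipolar, where polars are taken for the pairing of `ℝ^σ` with `V = ℝ^(σ)` modulo `ℤ`. The polar
`A ⊆ V` of `H` meets every finite-dimensional subspace in a closed set. Splitting off the largest
real subspace of `A` leaves a subgroup whose finite-dimensional slices are discrete, and since `V`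
has countable dimension this remainder is freely generated by an `ℝ`-linearly independent family,
found by Gaussian elimination along an enumeration of a basis. Hence in some basis of `V` the
elements of `A` have real coordinates along `τ`, integral coordinates along `ι` and zero
coordinates along `κ`. In the dual coordinates of `ℝ^σ`, the polar `H` of `A` is then
`0^τ × ℤ^ι × ℝ^κ`.
-/

open Filter Module Topology

universe u

section ClosedSubgroup

variable {E : Type*} [NormedAddCommGroup E] [NormedSpace ℝ E]

theorem smul_mem_of_tendsto_inv_norm_smul {Γ : AddSubgroup E} (hΓ : IsClosed (Γ : Set E))
    {v : ℕ → E} (hvΓ : ∀ n, v n ∈ Γ) (hv : Tendsto v atTop (𝓝 0)) {u : E}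
    (hu : Tendsto (fun n ↦ ‖v n‖⁻¹ • v n) atTop (𝓝 u)) (t : ℝ) : t • u ∈ Γ := by
  have hdiff : Tendsto (fun n ↦ ⌊t / ‖v n‖⌋ • v n - t • ‖v n‖⁻¹ • v n) atTop (𝓝 0) := by
    refine squeeze_zero_norm (fun n ↦ ?_) (tendsto_zero_iff_norm_tendsto_zero.1 hv)
    have hfloor : |(⌊t / ‖v n‖⌋ : ℝ) - t / ‖v n‖| ≤ 1 := by
      rw [abs_sub_comm, Int.self_sub_floor, Int.abs_fract]
      exact (Int.fract_lt_one _).le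
    calc ‖⌊t / ‖v n‖⌋ • v n - t • ‖v n‖⁻¹ • v n‖
        = |(⌊t / ‖v n‖⌋ : ℝ) - t / ‖v n‖| * ‖v n‖ := by
          rw [← Int.cast_smul_eq_zsmul ℝ, smul_smul, ← sub_smul, norm_smul, ← div_eq_mul_inv,
            Real.norm_eq_abs]
      _ ≤ ‖v n‖ := mul_le_of_le_one_left (norm_nonneg _) hfloor
  have hlim : Tendsto (fun n ↦ ⌊t / ‖v n‖⌋ • v n) atTop (𝓝 (t • u)) := by
    simpa using hdiff.add (hu.const_smul t)
  exact hΓ.mem_of_tendsto hlim (.of_forall fun n ↦ Γ.zsmul_mem (hvΓ n) _)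

theorem discreteTopology_of_isClosed_of_forall_smul_mem [ProperSpace E] {Γ : AddSubgroup E}
    (hΓ : IsClosed (Γ : Set E)) (hline : ∀ v : E, (∀ t : ℝ, t • v ∈ Γ) → v = 0) :
    DiscreteTopology Γ := by
  suffices h : ∃ ε > 0, ∀ v ∈ Γ, ‖v‖ < ε → v = 0 by
    obtain ⟨ε, hε, h⟩ := h
    refine discreteTopology_of_isOpen_singleton_zero (Metric.isOpen_iff.2 ?_)
    rintro _ rfl
    exact ⟨ε, hε, fun y hy ↦ Subtype.ext (h y y.2 (by simpa using hy))⟩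
  by_contra! hsmall
  choose v hvΓ hvlt hv0 using fun n : ℕ ↦ hsmall (1 / ((n : ℝ) + 1)) (by positivity)
  have hv : Tendsto v atTop (𝓝 0) :=
    squeeze_zero_norm (fun n ↦ (hvlt n).le) tendsto_one_div_add_atTop_nhds_zero_nat
  obtain ⟨u, hu, φ, hφ, hlim⟩ := (isCompact_sphere (0 : E) 1).tendsto_subseq
    (x := fun n ↦ ‖v n‖⁻¹ • v n) fun n ↦ by simp [norm_smul, hv0 n]
  have hu0 : u = 0 := hline u fun t ↦
    smul_mem_of_tendsto_inv_norm_smul hΓ (fun n ↦ hvΓ (φ n)) (hv.comp hφ.tendsto_atTop) hlim t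
  simp [hu0] at hu

end ClosedSubgroup

theorem exists_eq_zmultiples_of_finite_inter_Icc {G : AddSubgroup ℝ}
    (hG : ((G : Set ℝ) ∩ Set.Icc 0 1).Finite) : ∃ r, G = AddSubgroup.zmultiples r := by
  refine (AddSubgroup.dense_xor_cyclic G).or.resolve_left fun hdense ↦ ?_
  have hfin : (Set.Ioo (0 : ℝ) 1 ∩ G).Finite :=
    hG.subset fun x hx ↦ ⟨hx.2, Set.Ioo_subset_Icc_self hx.1⟩
  exact Set.Ioo_infinite zero_lt_one
    (hfin.subset (hfin.isClosed.closure_eq ▸ hdense.open_subset_closure_inter isOpen_Ioo))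

section Triangular

variable {ι R V : Type*} [LinearOrder ι] [Ring R] [AddCommGroup V] [Module R V]

theorem exists_mem_support_mem_supported_Iic {c : ι →₀ R} (hc : c ≠ 0) :
    ∃ i ∈ c.support, c ∈ Finsupp.supported R R (Set.Iic i) := by
  obtain ⟨i, hi, hmax⟩ := c.support.exists_max_image id (Finsupp.support_nonempty_iff.2 hc)
  exact ⟨i, hi, fun j hj ↦ hmax j hj⟩

variable (v : Basis ι R V) {w : ι → V}

theorem linearIndependent_of_triangular [NoZeroDivisors R]
    (hsupp : ∀ i, v.repr (w i) ∈ Finsupp.supported R R (Set.Iic i))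
    (hdiag : ∀ i, v.repr (w i) i ≠ 0) : LinearIndependent R w := by
  rw [linearIndependent_iff]
  intro c hc
  by_contra hne
  obtain ⟨i, hi, hci⟩ := exists_mem_support_mem_supported_Iic hne
  have hcoord : v.coord i (Finsupp.linearCombination R w c) = c i * v.repr (w i) i := by
    rw [Finsupp.linearCombination_apply, Finsupp.sum, map_sum, Finset.sum_eq_single_of_mem i hi]
    · simp
    · intro j hj hji
      have hij : i ∉ (v.repr (w j)).support := fun h ↦
        hji (le_antisymm (hci hj) (hsupp j h))
      simp [Finsupp.notMem_support_iff.1 hij]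
  rw [hc, map_zero] at hcoord
  exact mul_ne_zero (Finsupp.mem_support_iff.1 hi) (hdiag i) hcoord.symm

theorem closure_range_eq_of_triangular [WellFoundedLT ι] {A : AddSubgroup V}
    (hwA : ∀ i, w i ∈ A) (hsupp : ∀ i, v.repr (w i) ∈ Finsupp.supported R R (Set.Iic i))
    (hgen : ∀ i, ∀ a ∈ A, v.repr a ∈ Finsupp.supported R R (Set.Iic i) →
      ∃ m : ℤ, v.repr a i = m * v.repr (w i) i) :
    AddSubgroup.closure (Set.range w) = A := by
  refine le_antisymm ((AddSubgroup.closure_le _).2 (Set.range_subset_iff.2 hwA)) ?_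
  suffices key : ∀ i, ∀ a ∈ A, v.repr a ∈ Finsupp.supported R R (Set.Iic i) →
      a ∈ AddSubgroup.closure (Set.range w) by
    intro a ha
    by_cases ha0 : a = 0
    · exact ha0 ▸ zero_mem _
    · obtain ⟨i, -, hi⟩ := exists_mem_support_mem_supported_Iic
        (v.repr.map_ne_zero_iff.2 ha0)
      exact key i a ha hi
  intro i
  induction i using WellFoundedLT.induction with
  | ind i ih =>
    intro a ha hai
    obtain ⟨m, hm⟩ := hgen i a ha hai
    have hdiffA : a - m • w i ∈ A := A.sub_mem ha (A.zsmul_mem (hwA i) m)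
    have hdiff_supp : v.repr (a - m • w i) ∈ Finsupp.supported R R (Set.Iic i) := by
      rw [map_sub, map_zsmul]
      exact sub_mem hai (zsmul_mem (hsupp i) m)
    have hdiff_coord : v.repr (a - m • w i) i = 0 := by simp [hm]
    suffices hdiff : a - m • w i ∈ AddSubgroup.closure (Set.range w) by
      simpa using add_mem hdiff
        (zsmul_mem (AddSubgroup.subset_closure (Set.mem_range_self i)) m)
    by_cases hdiff0 : a - m • w i = 0
    · exact hdiff0 ▸ zero_mem _
    · obtain ⟨j, hj, hjsupp⟩ := exists_mem_support_mem_supported_Iic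
        (v.repr.map_ne_zero_iff.2 hdiff0)
      have hji : j ≠ i := by
        rintro rfl
        exact Finsupp.mem_support_iff.1 hj hdiff_coord
      exact ih j (lt_of_le_of_ne (hdiff_supp hj) hji) _ hdiffA hjsupp

end Triangular

section FinitelyClosed

variable {V W : Type*} [AddCommGroup V] [Module ℝ V] [AddCommGroup W] [Module ℝ W]

/-- A subgroup of a real vector space is finitely closed if its trace on every finite-dimensional
subspace is closed. Subspaces are replaced by linear maps from the spaces `ℝⁿ`, which carry their
topology with them. -/
def IsFinitelyClosed (A : AddSubgroup V) : Prop :=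
  ∀ (n : ℕ) (φ : (Fin n → ℝ) →ₗ[ℝ] V), IsClosed (φ ⁻¹' (A : Set V))

/-- The largest real subspace contained in an additive subgroup, that is, the union of the lines
through the origin that lie in the subgroup. -/
def lineSubspace (A : AddSubgroup V) : Submodule ℝ V where
  carrier := {v | ∀ t : ℝ, t • v ∈ A}
  zero_mem' t := by simp
  add_mem' ha hb t := by
    rw [smul_add]
    exact A.add_mem (ha t) (hb t)
  smul_mem' c v hv t := by
    rw [smul_smul]
    exact hv _

theorem lineSubspace_le (A : AddSubgroup V) : (lineSubspace A).toAddSubgroup ≤ A :=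
  fun v hv ↦ by simpa using hv 1

theorem lineSubspace_comap (A : AddSubgroup V) (f : W →ₗ[ℝ] V) :
    lineSubspace (A.comap f.toAddMonoidHom) = (lineSubspace A).comap f := by
  ext v
  simp [lineSubspace]

namespace IsFinitelyClosed

variable {A : AddSubgroup V}

theorem isClosed_preimage (hA : IsFinitelyClosed A) {E : Type*} [AddCommGroup E] [Module ℝ E]
    [TopologicalSpace E] [IsTopologicalAddGroup E] [ContinuousSMul ℝ E] [T2Space E]
    [FiniteDimensional ℝ E] (φ : E →ₗ[ℝ] V) : IsClosed (φ ⁻¹' (A : Set V)) := by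
  let e := (finBasis ℝ E).equivFunL
  convert (hA _ (φ ∘ₗ e.symm.toLinearMap)).preimage e.continuous
  ext x
  simp

theorem comap (hA : IsFinitelyClosed A) (f : W →ₗ[ℝ] V) :
    IsFinitelyClosed (A.comap f.toAddMonoidHom) :=
  fun n φ ↦ hA n (f ∘ₗ φ)

theorem finite_image_inter (hA : IsFinitelyClosed A) (hline : lineSubspace A = ⊥) {E : Type*}
    [NormedAddCommGroup E] [NormedSpace ℝ E] [FiniteDimensional ℝ E] {φ : E →ₗ[ℝ] V}
    (hφ : Function.Injective φ) {K : Set E} (hK : Bornology.IsBounded K) :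
    (φ '' K ∩ A).Finite := by
  have : ProperSpace E := FiniteDimensional.proper ℝ E
  let Γ := A.comap φ.toAddMonoidHom
  have hΓ : IsClosed (Γ : Set E) := hA.isClosed_preimage φ
  have hΓline : lineSubspace Γ = ⊥ := by
    rw [lineSubspace_comap, hline, Submodule.comap_bot, LinearMap.ker_eq_bot.2 hφ]
  have : DiscreteTopology Γ := discreteTopology_of_isClosed_of_forall_smul_mem hΓ fun v hv ↦
    (Submodule.mem_bot ℝ).1 (hΓline ▸ hv)
  rw [← Set.image_inter_preimage]
  exact (Metric.finite_isBounded_inter_isClosed DiscreteTopology.isDiscrete hK hΓ).image φ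

variable {ι : Type*} (v : Basis ι ℝ V)

theorem finite_setOf_repr_mem_Icc (hA : IsFinitelyClosed A) (hline : lineSubspace A = ⊥)
    {S : Set ι} (hS : S.Finite) :
    {a | a ∈ A ∧ v.repr a ∈ Finsupp.supported ℝ ℝ S ∧ ∀ i, v.repr a i ∈ Set.Icc 0 1}.Finite := by
  have := hS.fintype
  have hφ : Function.Injective (Fintype.linearCombination ℝ fun i : S ↦ v i) :=
    linearIndependent_iff_injective_fintypeLinearCombination.1
      (v.linearIndependent.comp _ Subtype.val_injective)
  refine (hA.finite_image_inter hline hφ (Metric.isBounded_Icc 0 1)).subset ?_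
  rintro a ⟨haA, haS, haI⟩
  refine ⟨⟨fun i ↦ v.repr a i, ⟨fun i ↦ (haI i).1, fun i ↦ (haI i).2⟩, ?_⟩, haA⟩
  conv_rhs => rw [← v.linearCombination_repr a]
  rw [Finsupp.linearCombination_apply, Finsupp.sum_of_support_subset (s := S.toFinset) _
    (by simpa [Finsupp.mem_supported] using haS) _ (by simp), Fintype.linearCombination_apply]
  exact (Finset.sum_subtype S.toFinset (by simp) fun i ↦ v.repr a i • v i).symm

end IsFinitelyClosed

theorem repr_symm_mapRange_fract_mem {ι : Type*} {A : AddSubgroup V} (v : Basis ι ℝ V)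
    (hv : ∀ i, v i ∈ A) {a : V} (ha : a ∈ A) :
    v.repr.symm ((v.repr a).mapRange Int.fract Int.fract_zero) ∈ A := by
  have hfloor : v.repr.symm ((v.repr a).mapRange (fun x ↦ (⌊x⌋ : ℝ)) (by simp)) ∈ A := by
    rw [Basis.repr_symm_apply, Finsupp.linearCombination_apply,
      Finsupp.sum_mapRange_index (by simp)]
    refine A.sum_mem fun i _ ↦ ?_
    simpa only [Int.cast_smul_eq_zsmul] using A.zsmul_mem (hv i) _
  have hfract : v.repr.symm ((v.repr a).mapRange Int.fract Int.fract_zero) =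
      a - v.repr.symm ((v.repr a).mapRange (fun x ↦ (⌊x⌋ : ℝ)) (by simp)) := by
    apply v.repr.injective
    ext i
    simp
  rw [hfract]
  exact A.sub_mem ha hfloor

namespace IsFinitelyClosed

variable {A : AddSubgroup V}

theorem exists_generator_coord (hA : IsFinitelyClosed A) (hline : lineSubspace A = ⊥) {ι : Type*}
    (v : Basis ι ℝ V) (hv : ∀ i, v i ∈ A) {S : Set ι} (hS : S.Finite) {i : ι} (hi : i ∈ S) :
    ∃ w ∈ A, v.repr w ∈ Finsupp.supported ℝ ℝ S ∧ v.repr w i ≠ 0 ∧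
      ∀ a ∈ A, v.repr a ∈ Finsupp.supported ℝ ℝ S → ∃ m : ℤ, v.repr a i = m * v.repr w i := by
  let B : AddSubgroup V := A ⊓ ((Finsupp.supported ℝ ℝ S).comap v.repr.toLinearMap).toAddSubgroup
  let G : AddSubgroup ℝ := B.map (v.coord i).toAddMonoidHom
  have hmemG : ∀ a ∈ B, v.repr a i ∈ G := fun a ha ↦ ⟨a, ha, rfl⟩
  have h1G : (1 : ℝ) ∈ G := by
    have hviB : v i ∈ B := ⟨hv i, by simpa using Finsupp.single_mem_supported ℝ (1 : ℝ) hi⟩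
    simpa using hmemG _ hviB
  -- Modulo `1`, a coordinate in `G` is taken by a vector of `A` in the unit box over `S`.
  have hGfin : ((G : Set ℝ) ∩ Set.Icc 0 1).Finite := by
    refine (((hA.finite_setOf_repr_mem_Icc v hline hS).image (v.coord i)).insert 1).subset ?_
    rintro _ ⟨⟨a, ha, rfl⟩, h0, h1⟩
    refine h1.eq_or_lt.imp id fun hlt ↦
      ⟨_, ⟨repr_symm_mapRange_fract_mem v hv ha.1, ?_, fun j ↦ ?_⟩, ?_⟩
    · rw [LinearEquiv.apply_symm_apply]
      exact (Finset.coe_subset.2 Finsupp.support_mapRange).trans ha.2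
    · simp [Int.fract_nonneg, (Int.fract_lt_one _).le]
    · simpa using Int.fract_eq_self.2 ⟨h0, hlt⟩
  obtain ⟨r, hr⟩ := exists_eq_zmultiples_of_finite_inter_Icc hGfin
  obtain ⟨w, hwB, hwr⟩ : r ∈ G := hr ▸ AddSubgroup.mem_zmultiples r
  have hgen : ∀ x ∈ G, ∃ m : ℤ, x = m * v.repr w i := fun x hx ↦ by
    obtain ⟨m, rfl⟩ := AddSubgroup.mem_zmultiples_iff.1 (hr ▸ hx)
    exact ⟨m, by rw [← hwr]; simp⟩
  refine ⟨w, hwB.1, hwB.2, fun h0 ↦ ?_, fun a ha haS ↦ hgen _ (hmemG a ⟨ha, haS⟩)⟩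
  obtain ⟨m, hm⟩ := hgen 1 h1G
  simp [h0] at hm

theorem exists_linearIndependent_closure_range_eq (hA : IsFinitelyClosed A)
    (hline : lineSubspace A = ⊥) {ι : Type*} [Countable ι] (v : Basis ι ℝ V)
    (hv : ∀ i, v i ∈ A) :
    ∃ w : ι → V, LinearIndependent ℝ w ∧ AddSubgroup.closure (Set.range w) = A := by
  obtain ⟨f, hf⟩ := exists_injective_nat ι
  let : LinearOrder ι := LinearOrder.lift' f hf
  have hfin : ∀ i : ι, (Set.Iic i).Finite := fun i ↦ (Set.finite_Iic (f i)).preimage hf.injOn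
  have : WellFoundedLT ι := ⟨InvImage.wf f wellFounded_lt⟩
  choose w hwA hsupp hdiag hgen using fun i ↦
    hA.exists_generator_coord hline v hv (hfin i) Set.self_mem_Iic
  exact ⟨w, linearIndependent_of_triangular v hsupp hdiag,
    closure_range_eq_of_triangular v hwA hsupp hgen⟩

end IsFinitelyClosed

end FinitelyClosed

section Structure

theorem sup_inf_toAddSubgroup_of_codisjoint {R M : Type*} [Ring R] [AddCommGroup M] [Module R M]
    {A : AddSubgroup M} {L N : Submodule R M} (hLA : L.toAddSubgroup ≤ A) (hLN : Codisjoint L N) :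
    L.toAddSubgroup ⊔ (N.toAddSubgroup ⊓ A) = A := by
  rw [← sup_inf_assoc_of_le _ hLA, ← Submodule.sup_toAddSubgroup, hLN.eq_top,
    Submodule.top_toAddSubgroup, top_inf_eq]

theorem countable_of_linearIndependent {R M ι : Type*} [Ring R] [Nontrivial R] [AddCommGroup M]
    [Module R M] {v : ι → M} (hv : LinearIndependent R v)
    (hM : Module.rank R M ≤ Cardinal.aleph0) : Countable ι := by
  rw [← Cardinal.mk_le_aleph0_iff, ← Cardinal.lift_le_aleph0]
  exact hv.cardinal_lift_le_rank.trans (Cardinal.lift_le_aleph0.2 hM)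

variable {V : Type u} [AddCommGroup V] [Module ℝ V]

theorem IsFinitelyClosed.exists_linearIndependent_closure_range_eq_inf {A : AddSubgroup V}
    (hA : IsFinitelyClosed A) (hV : Module.rank ℝ V ≤ Cardinal.aleph0) {M : Submodule ℝ V}
    (hM : Disjoint (lineSubspace A) M) :
    ∃ (ι : Type u) (w : ι → V), LinearIndependent ℝ w ∧
      AddSubgroup.closure (Set.range w) = M.toAddSubgroup ⊓ A := by
  let U : Submodule ℝ V := Submodule.span ℝ (M ∩ A)
  have hUM : U ≤ M := Submodule.span_le.2 Set.inter_subset_left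
  let A' : AddSubgroup U := A.comap U.subtype.toAddMonoidHom
  have hline : lineSubspace A' = ⊥ := by
    rw [lineSubspace_comap]
    exact Submodule.disjoint_iff_comap_eq_bot.1 (hM.mono_right hUM).symm
  have hspan : ⊤ ≤ Submodule.span ℝ (A' : Set U) := by
    rw [← Submodule.span_span_coe_preimage (R := ℝ) (s := (M ∩ A : Set V))]
    exact Submodule.span_mono fun x hx ↦ hx.2
  let v := Basis.ofSpan hspan
  have hv : ∀ i, v i ∈ A' := fun i ↦ Basis.ofSpan_subset hspan (Set.mem_range_self i)
  have : Countable _ := countable_of_linearIndependent v.linearIndependent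
    ((Submodule.rank_le U).trans hV)
  obtain ⟨w, hw, hwA⟩ := (hA.comap U.subtype).exists_linearIndependent_closure_range_eq hline v hv
  refine ⟨_, U.subtype ∘ w, hw.map' U.subtype U.ker_subtype, ?_⟩
  have hmap := AddMonoidHom.map_closure U.subtype.toAddMonoidHom (Set.range w)
  rw [hwA, ← Set.range_comp] at hmap
  refine hmap.symm.trans (le_antisymm ?_ fun a ha ↦ ⟨⟨a, Submodule.subset_span ha⟩, ha.2, rfl⟩)
  rintro _ ⟨x, hx, rfl⟩
  exact ⟨hUM x.2, hx⟩

theorem IsFinitelyClosed.exists_basis_eq_span_sup_closure {A : AddSubgroup V}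
    (hA : IsFinitelyClosed A) (hV : Module.rank ℝ V ≤ Cardinal.aleph0) :
    ∃ (τ ι κ : Type u) (b : Basis ((τ ⊕ ι) ⊕ κ) ℝ V),
      A = (Submodule.span ℝ (Set.range fun t ↦ b (.inl (.inl t)))).toAddSubgroup ⊔
        AddSubgroup.closure (Set.range fun i ↦ b (.inl (.inr i))) := by
  obtain ⟨M, hM⟩ := Submodule.exists_isCompl (lineSubspace A)
  obtain ⟨ι, w, hw, hwA⟩ := hA.exists_linearIndependent_closure_range_eq_inf hV hM.disjoint
  obtain ⟨τ, ⟨l⟩⟩ : ∃ τ : Type u, Nonempty (Basis τ ℝ (lineSubspace A)) :=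
    ⟨_, ⟨Basis.ofVectorSpace ℝ _⟩⟩
  have hl : Submodule.span ℝ (Set.range fun t ↦ (l t : V)) = lineSubspace A := by
    have hmap := congrArg (Submodule.map (lineSubspace A).subtype) l.span_eq
    rwa [Submodule.map_span, ← Set.range_comp, Submodule.map_subtype_top] at hmap
  have hwM : Submodule.span ℝ (Set.range w) ≤ M :=
    Submodule.span_le.2 fun x hx ↦ (hwA.le (AddSubgroup.subset_closure hx)).1
  have hlw : LinearIndependent ℝ (Sum.elim (fun t ↦ (l t : V)) w) :=
    (l.linearIndependent.map' _ (lineSubspace A).ker_subtype).sum_type hw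
      (hl.symm ▸ hM.disjoint.mono_right hwM)
  refine ⟨τ, ι, _, Basis.sumExtend hlw, ?_⟩
  have hb : ∀ j, Basis.sumExtend hlw (.inl j) = Sum.elim (fun t ↦ (l t : V)) w j := fun j ↦ by
    simp only [Basis.sumExtend, Basis.reindex_apply, Basis.extend_apply_self]
    rfl
  simp only [hb, Sum.elim_inl, Sum.elim_inr]
  rw [hl, hwA, sup_inf_toAddSubgroup_of_codisjoint (lineSubspace_le A) hM.codisjoint]

end Structure

section Polar

variable {V W : Type*} [AddCommGroup V] [Module ℝ V] [AddCommGroup W] [Module ℝ W]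

/-- The polar of a subgroup `A` with respect to a pairing `B`: the vectors that pair integrally
with `A`. It plays the role of the annihilator in Pontryagin duality, a character being the class
modulo `ℤ` of a linear functional. -/
def integralPolar (B : V →ₗ[ℝ] W →ₗ[ℝ] ℝ) (A : AddSubgroup V) : AddSubgroup W where
  carrier := {y | ∀ x ∈ A, B x y ∈ (Int.castAddHom ℝ).range}
  zero_mem' x _ := by
    rw [map_zero]
    exact zero_mem _
  add_mem' hy hz x hx := by
    rw [map_add]
    exact add_mem (hy x hx) (hz x hx)
  neg_mem' hy x hx := by
    rw [map_neg]
    exact neg_mem (hy x hx)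

variable (B : V →ₗ[ℝ] W →ₗ[ℝ] ℝ)

theorem mem_integralPolar {A : AddSubgroup V} {y : W} :
    y ∈ integralPolar B A ↔ ∀ x ∈ A, B x y ∈ (Int.castAddHom ℝ).range :=
  Iff.rfl

theorem le_integralPolar_flip_integralPolar (A : AddSubgroup V) :
    A ≤ integralPolar B.flip (integralPolar B A) :=
  fun x hx _ hy ↦ hy x hx

theorem isFinitelyClosed_integralPolar (A : AddSubgroup V) :
    IsFinitelyClosed (integralPolar B A) := by
  intro n φ
  have hpre : φ ⁻¹' (integralPolar B A : Set W) =
      ⋂ x ∈ A, (B x ∘ₗ φ) ⁻¹' Set.range ((↑) : ℤ → ℝ) := by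
    ext c
    simp only [Set.mem_preimage, SetLike.mem_coe, mem_integralPolar, Set.mem_iInter]
    rfl
  rw [hpre]
  exact isClosed_biInter fun x _ ↦ Int.isClosedEmbedding_coe_real.isClosed_range.preimage
    (LinearMap.continuous_of_finiteDimensional _)

theorem eq_zero_of_forall_mul_mem_range_intCast {r : ℝ}
    (hr : ∀ c : ℝ, c * r ∈ (Int.castAddHom ℝ).range) : r = 0 := by
  by_contra hr0
  obtain ⟨m, hm : (m : ℝ) = (2 * r)⁻¹ * r⟩ := hr (2 * r)⁻¹
  have htwo : (m : ℝ) * 2 = 1 := by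
    rw [hm]
    field_simp
  have : m * 2 = 1 := by exact_mod_cast htwo
  omega

theorem mem_integralPolar_span_sup_closure {τ ι : Type*} (l : τ → V) (w : ι → V) {y : W} :
    y ∈ integralPolar B ((Submodule.span ℝ (Set.range l)).toAddSubgroup ⊔
        AddSubgroup.closure (Set.range w)) ↔
      (∀ t, B (l t) y = 0) ∧ ∀ i, B (w i) y ∈ (Int.castAddHom ℝ).range := by
  let Γ : AddSubgroup V := (Int.castAddHom ℝ).range.comap (B.flip y).toAddMonoidHom
  have hspan : (Submodule.span ℝ (Set.range l)).toAddSubgroup ≤ Γ ↔ ∀ t, B (l t) y = 0 := by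
    refine ⟨fun h t ↦ eq_zero_of_forall_mul_mem_range_intCast fun c ↦ ?_, fun h ↦ ?_⟩
    · have hmem : B (c • l t) y ∈ (Int.castAddHom ℝ).range :=
        h (Submodule.smul_mem _ c (Submodule.subset_span (Set.mem_range_self t)))
      simpa only [map_smul, LinearMap.smul_apply, smul_eq_mul] using hmem
    · have hker : Submodule.span ℝ (Set.range l) ≤ (B.flip y).ker :=
        Submodule.span_le.2 (Set.range_subset_iff.2 h)
      exact fun x hx ↦ ⟨0, by simpa using! (hker hx).symm⟩
  have hclosure : AddSubgroup.closure (Set.range w) ≤ Γ ↔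
      ∀ i, B (w i) y ∈ (Int.castAddHom ℝ).range :=
    (AddSubgroup.closure_le _).trans Set.range_subset_iff
  rw [← hspan, ← hclosure, ← sup_le_iff]
  rfl

end Polar

section Bipolar

theorem IsFinitelyClosed.exists_dual_notMem {V : Type u} [AddCommGroup V] [Module ℝ V]
    {A : AddSubgroup V} (hA : IsFinitelyClosed A) (hV : Module.rank ℝ V ≤ Cardinal.aleph0) {y : V}
    (hy : y ∉ A) :
    ∃ f ∈ integralPolar (Dual.eval ℝ V) A, f y ∉ (Int.castAddHom ℝ).range := by
  obtain ⟨τ, ι, κ, b, rfl⟩ := hA.exists_basis_eq_span_sup_closure hV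
  contrapose! hy
  simp only [mem_integralPolar_span_sup_closure, Dual.eval_apply] at hy
  have hι : ∀ i, b.repr y (.inl (.inr i)) ∈ (Int.castAddHom ℝ).range := fun i ↦ by
    classical
    refine hy (b.coord _) ⟨by simp, fun j ↦ ?_⟩
    by_cases hij : i = j
    · exact ⟨1, by simp [hij]⟩
    · exact ⟨0, by simp [hij]⟩
  have hκ : ∀ k, b.repr y (.inr k) = 0 := fun k ↦
    eq_zero_of_forall_mul_mem_range_intCast fun c ↦
      hy (c • b.coord _) ⟨by simp, fun i ↦ ⟨0, by simp⟩⟩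
  rw [← b.linearCombination_repr y, Finsupp.linearCombination_apply]
  refine AddSubgroup.sum_mem _ fun j _ ↦ ?_
  rcases j with (t | i) | k
  · exact AddSubgroup.mem_sup_left
      (Submodule.smul_mem _ _ (Submodule.subset_span (Set.mem_range_self t)))
  · obtain ⟨m, hm : (m : ℝ) = _⟩ := hι i
    simp only [← hm, Int.cast_smul_eq_zsmul]
    exact AddSubgroup.mem_sup_right
      (zsmul_mem (AddSubgroup.subset_closure (Set.mem_range_self i)) m)
  · simp [hκ k]

/-- The pairing of `ℝ^σ` with the finitely supported families `ℝ^(σ)`, which are its continuous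
linear functionals. -/
noncomputable abbrev finsuppPairing (σ : Type*) : (σ → ℝ) →ₗ[ℝ] (σ →₀ ℝ) →ₗ[ℝ] ℝ :=
  Finsupp.bilinearCombination ℝ ℝ

variable {σ : Type*}

theorem exists_finsupp_pairing_eq_comp_restrict (I : Finset σ) (f : (I → ℝ) →ₗ[ℝ] ℝ) :
    ∃ a : σ →₀ ℝ, ∀ x, finsuppPairing σ x a = f (I.restrict x) := by
  classical
  refine ⟨∑ i : I, Finsupp.single i.1 (f fun j ↦ if i = j then 1 else 0), fun x ↦ ?_⟩
  rw [f.pi_apply_eq_sum_univ]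
  simp [mul_comm]

theorem exists_finset_restrict_notMem_topologicalClosure {H : AddSubgroup (σ → ℝ)}
    (hH : IsClosed (H : Set (σ → ℝ))) {x : σ → ℝ} (hx : x ∉ H) :
    ∃ I : Finset σ, I.restrict x ∉
      (H.map (LinearMap.funLeft ℝ ℝ (Subtype.val : I → σ)).toAddMonoidHom).topologicalClosure := by
  obtain ⟨I, u, hu, hsub⟩ := isOpen_pi_iff.1 hH.isOpen_compl x hx
  refine ⟨I, fun hmem ↦ ?_⟩
  obtain ⟨_, hy, h, hh, rfl⟩ := mem_closure_iff.1 hmem (Set.univ.pi fun i : I ↦ u i)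
    (isOpen_set_pi Set.finite_univ fun i _ ↦ (hu i i.2).1) fun i _ ↦ (hu i i.2).2
  exact hsub (fun i hi ↦ hy ⟨i, hi⟩ trivial) hh

theorem integralPolar_flip_integralPolar_finsuppPairing {H : AddSubgroup (σ → ℝ)}
    (hH : IsClosed (H : Set (σ → ℝ))) :
    integralPolar (finsuppPairing σ).flip (integralPolar (finsuppPairing σ) H) = H := by
  refine le_antisymm (fun x hx ↦ ?_) (le_integralPolar_flip_integralPolar _ H)
  by_contra hxH
  obtain ⟨I, hI⟩ := exists_finset_restrict_notMem_topologicalClosure hH hxH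
  have hC := AddSubgroup.isClosed_topologicalClosure
    (H.map (LinearMap.funLeft ℝ ℝ (Subtype.val : I → σ)).toAddMonoidHom)
  have hCfin : IsFinitelyClosed (AddSubgroup.topologicalClosure _) := fun n φ ↦
    hC.preimage φ.continuous_of_finiteDimensional
  obtain ⟨f, hf, hfx⟩ := hCfin.exists_dual_notMem (rank_lt_aleph0 ℝ _).le hI
  obtain ⟨a, ha⟩ := exists_finsupp_pairing_eq_comp_restrict I f
  refine hfx (ha x ▸ hx a fun h hh ↦ ?_)
  rw [ha]
  exact hf _ (AddSubgroup.le_topologicalClosure _ ⟨h, hh, rfl⟩)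

end Bipolar

section Embedding

/-- The inclusion of `ℤ^ι × ℝ^κ` in `ℝ^(τ ⊔ ι ⊔ κ)`, with zero coordinates along `τ`. -/
def sumElimIntCast (τ ι κ : Type*) : (ι → ℤ) × (κ → ℝ) →+ ((τ ⊕ ι) ⊕ κ → ℝ) where
  toFun p := Sum.elim (Sum.elim 0 fun i ↦ (p.1 i : ℝ)) p.2
  map_zero' := by
    ext ((t | i) | k) <;> simp
  map_add' p q := by
    ext ((t | i) | k) <;> simp

theorem isEmbedding_sumElimIntCast (τ ι κ : Type*) : IsEmbedding (sumElimIntCast τ ι κ) := by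
  have hcast : IsEmbedding (Pi.map fun (_ : ι) (m : ℤ) ↦ (m : ℝ)) :=
    .piMap fun _ ↦ Int.isClosedEmbedding_coe_real.isEmbedding
  have hzero : IsEmbedding (Prod.mk (0 : τ → ℝ) : (ι → ℝ) → _) := isEmbedding_prodMkRight 0
  have hleft := Homeomorph.sumArrowHomeomorphProdArrow.symm.isEmbedding.comp (hzero.comp hcast)
  exact Homeomorph.sumArrowHomeomorphProdArrow.symm.isEmbedding.comp (hleft.prodMap .id)

theorem mem_range_sumElimIntCast {τ ι κ : Type*} {y : (τ ⊕ ι) ⊕ κ → ℝ} :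
    y ∈ (sumElimIntCast τ ι κ).range ↔
      (∀ t, y (.inl (.inl t)) = 0) ∧ ∀ i, y (.inl (.inr i)) ∈ (Int.castAddHom ℝ).range := by
  constructor
  · rintro ⟨p, rfl⟩
    exact ⟨fun t ↦ rfl, fun i ↦ ⟨p.1 i, rfl⟩⟩
  · rintro ⟨hτ, hι⟩
    choose m hm using hι
    refine ⟨(m, fun k ↦ y (.inr k)), ?_⟩
    ext ((t | i) | k)
    · exact (hτ t).symm
    · exact hm i
    · rfl

/-- A basis `b` of `ℝ^(σ)` gives linear coordinates on its dual `ℝ^σ`: the values at `b j`. -/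
noncomputable def dualCoordEquiv {σ J : Type*} (b : Basis J ℝ (σ →₀ ℝ)) :
    (σ → ℝ) ≃L[ℝ] (J → ℝ) where
  toLinearEquiv := Finsupp.llift ℝ ℝ ℝ σ ≪≫ₗ (b.constr ℝ).symm
  continuous_toFun := continuous_pi fun j ↦ by
    change Continuous fun x : σ → ℝ ↦ (b j).sum fun s r ↦ r • x s
    unfold Finsupp.sum
    fun_prop
  continuous_invFun := continuous_pi fun s ↦ by
    change Continuous fun y : J → ℝ ↦ b.constr ℝ y (Finsupp.single s 1)
    simp only [Basis.constr_apply, Finsupp.sum]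
    fun_prop

theorem dualCoordEquiv_apply {σ J : Type*} (b : Basis J ℝ (σ →₀ ℝ)) (x : σ → ℝ) (j : J) :
    dualCoordEquiv b x j = finsuppPairing σ x (b j) :=
  rfl

theorem exists_isEmbedding_range_eq {σ : Type u} [Countable σ] {H : AddSubgroup (σ → ℝ)}
    (hH : IsClosed (H : Set (σ → ℝ))) :
    ∃ (ι κ : Type u) (f : (ι → ℤ) × (κ → ℝ) →+ (σ → ℝ)),
      Countable ι ∧ Countable κ ∧ IsEmbedding f ∧ f.range = H := by
  have hrank : Module.rank ℝ (σ →₀ ℝ) ≤ Cardinal.aleph0 := by simp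
  obtain ⟨τ, ι, κ, b, hb⟩ :=
    (isFinitelyClosed_integralPolar (finsuppPairing σ) H).exists_basis_eq_span_sup_closure hrank
  let T := dualCoordEquiv b
  have hHT : ∀ x, x ∈ H ↔ T x ∈ (sumElimIntCast τ ι κ).range := fun x ↦ by
    conv_lhs => rw [← integralPolar_flip_integralPolar_finsuppPairing hH, hb]
    rw [mem_integralPolar_span_sup_closure, mem_range_sumElimIntCast]
    simp only [T, dualCoordEquiv_apply, LinearMap.flip_apply]
  refine ⟨ι, κ, T.symm.toLinearMap.toAddMonoidHom.comp (sumElimIntCast τ ι κ),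
    countable_of_linearIndependent (b.linearIndependent.comp (fun i ↦ .inl (.inr i)) ?_) hrank,
    countable_of_linearIndependent (b.linearIndependent.comp .inr Sum.inr_injective) hrank,
    T.symm.toHomeomorph.isEmbedding.comp (isEmbedding_sumElimIntCast τ ι κ), ?_⟩
  · exact Sum.inl_injective.comp Sum.inr_injective
  · ext x
    rw [hHT]
    exact exists_congr fun p ↦ T.symm_apply_eq

end Embedding

theorem nonempty_continuousAddEquiv_of_isEmbedding {G E : Type*} [AddGroup G] [TopologicalSpace G]
    [AddGroup E] [TopologicalSpace E] {f : G →+ E} (hf : IsEmbedding f) {H : AddSubgroup E}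
    (hH : f.range = H) : Nonempty (H ≃ₜ+ G) := by
  subst hH
  exact ⟨(ContinuousAddEquiv.mk' (N := f.range) hf.toHomeomorph
    fun x y ↦ Subtype.ext (map_add f x y)).symm⟩

theorem infinite_or_infinite_of_homeomorph {X ι κ : Type*} [TopologicalSpace X]
    (hX : ¬ LocallyCompactSpace X) (e : X ≃ₜ (ι → ℤ) × (κ → ℝ)) : Infinite ι ∨ Infinite κ := by
  contrapose! hX
  obtain ⟨_, _⟩ := hX
  exact e.isClosedEmbedding.locallyCompactSpace

/-- The identification of a product of finite-dimensional spaces with a power of `ℝ` by a choice of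
basis in every factor. -/
noncomputable def sigmaCoordEquivPi {σ : Type*} (E : σ → Type*) [∀ s, AddCommGroup (E s)]
    [∀ s, Module ℝ (E s)] [∀ s, TopologicalSpace (E s)] [∀ s, IsTopologicalAddGroup (E s)]
    [∀ s, ContinuousSMul ℝ (E s)] [∀ s, T2Space (E s)] [∀ s, FiniteDimensional ℝ (E s)] :
    ((Σ s, Fin (finrank ℝ (E s))) → ℝ) ≃L[ℝ] ∀ s, E s :=
  ContinuousLinearEquiv.trans
    { LinearEquiv.piCurry ℝ (fun (s : σ) (_ : Fin (finrank ℝ (E s))) ↦ ℝ) with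
      continuous_toFun := by
        change Continuous (Sigma.curry (γ := fun (s : σ) (_ : Fin (finrank ℝ (E s))) ↦ ℝ))
        unfold Sigma.curry
        fun_prop
      continuous_invFun := by
        change Continuous (Sigma.uncurry (γ := fun (s : σ) (_ : Fin (finrank ℝ (E s))) ↦ ℝ))
        unfold Sigma.uncurry
        fun_prop }
    (.piCongrRight fun s ↦ (finBasis ℝ (E s)).equivFunL.symm)

theorem stmt19_general {σ : Type u} [Countable σ] {E : σ → Type*} [∀ s, AddCommGroup (E s)]
    [∀ s, Module ℝ (E s)] [∀ s, TopologicalSpace (E s)] [∀ s, IsTopologicalAddGroup (E s)]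
    [∀ s, ContinuousSMul ℝ (E s)] [∀ s, T2Space (E s)] [∀ s, FiniteDimensional ℝ (E s)]
    (H : AddSubgroup (∀ s, E s)) (hcl : IsClosed (H : Set (∀ s, E s))) :
    ∃ ι κ : Type u, Countable ι ∧ Countable κ ∧ Nonempty (H ≃ₜ+ (ι → ℤ) × (κ → ℝ)) := by
  let T := sigmaCoordEquivPi E
  obtain ⟨ι, κ, f, hι, hκ, hf, hrange⟩ := exists_isEmbedding_range_eq
    (H := H.comap T.toLinearMap.toAddMonoidHom) (hcl.preimage T.continuous)
  refine ⟨ι, κ, hι, hκ, nonempty_continuousAddEquiv_of_isEmbedding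
    (f := T.toLinearMap.toAddMonoidHom.comp f) (T.toHomeomorph.isEmbedding.comp hf) ?_⟩
  rw [AddMonoidHom.range_comp, hrange]
  exact AddSubgroup.map_comap_eq_self_of_surjective T.surjective H

/-- A closed non-locally compact subgroup `H` of a countable product `∏ₙ ℝ^{kₙ}` is
topologically isomorphic to `ℤ^k ⊕ ℝ^l` with `k, l ∈ ℕ ∪ {ℕ}`, at least one of them
infinite. -/
theorem stmt19 (k : ℕ → ℕ) (H : AddSubgroup (∀ n, Fin (k n) → ℝ))
    (hcl : IsClosed (H : Set (∀ n, Fin (k n) → ℝ)))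
    (hnlc : ¬ LocallyCompactSpace H) :
    ∃ (ι κ : Type), Countable ι ∧ Countable κ ∧ (Infinite ι ∨ Infinite κ) ∧
      ∃ e : H ≃ₜ ((ι → ℤ) × (κ → ℝ)),
        ∀ x y : H, e (x + y) = e x + e y := by
  obtain ⟨ι, κ, hι, hκ, ⟨e⟩⟩ := stmt19_general H hcl
  exact ⟨ι, κ, hι, hκ, infinite_or_infinite_of_homeomorph hnlc e.toHomeomorph, e.toHomeomorph,
    map_add e⟩
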